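/- For every integer k with 0 ≤ k ≤ r the following identity holds in Cl ⊗ Cl: I_{2k}·P_r^S = (−1)^k·(2k)!·binom(r,k)·P_r^S, where P_r^S := (p_{+1,+1} + p_{−1,−1})·P_r. -/

import Mathlib

open scoped TensorProduct

noncomputable section

/-- The quadratic form `x₁² + ⋯ + x_{2r}²` on `ℂ^{2r}`. -/
def Qf (r : ℕ) : QuadraticForm ℂ (Fin (2*r) → ℂ) :=
  QuadraticMap.weightedSumSquares ℂ (fun _ : Fin (2*r) => (1:ℂ))

/-- The Clifford algebra of `Qf r`. -/
abbrev Cl (r : ℕ) := CliffordAlgebra (Qf r)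

/-- The generators `Γ_i`. -/
def Γgen (r : ℕ) (i : Fin (2*r)) : Cl r :=
  CliffordAlgebra.ι (Qf r) (Pi.single i 1)

/-- The antisymmetrised products `Γ_{[i₁…i_k]}`. -/
def Γbr (r k : ℕ) (i : Fin k → Fin (2*r)) : Cl r :=
  ((k.factorial : ℂ))⁻¹ •
    ∑ σ : Equiv.Perm (Fin k),
      ((Equiv.Perm.sign σ : ℤ) : ℂ) • (List.ofFn fun j => Γgen r (i (σ j))).prod

/-- The invariants `I_k ∈ Cl ⊗ Cl`. -/
def Ik (r k : ℕ) : Cl r ⊗[ℂ] Cl r :=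
  ∑ i : Fin k → Fin (2*r), (Γbr r k i) ⊗ₜ[ℂ] (Γbr r k i)

/-- The split Casimir element `Ĉ = −I₂/(16(2r−2))`. -/
def sC (r : ℕ) : Cl r ⊗[ℂ] Cl r := (-(16*(2*(r:ℂ)-2))⁻¹) • Ik r 2

/-- The top element `Γ_{2r+1} = (−i)^r Γ₁⋯Γ_{2r}`. -/
def Γtop (r : ℕ) : Cl r :=
  ((-Complex.I)^r) • (List.ofFn fun i : Fin (2*r) => Γgen r i).prod

/-- The chirality projector `p_ε = (1 + ε Γ_{2r+1})/2`. -/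
def pCh (r : ℕ) (ε : ℂ) : Cl r := (2:ℂ)⁻¹ • (1 + ε • Γtop r)

/-- The chirality projectors `p_{εε'} = p_ε ⊗ p_{ε'}`. -/
def ppCh (r : ℕ) (ε ε' : ℂ) : Cl r ⊗[ℂ] Cl r := (pCh r ε) ⊗ₜ[ℂ] (pCh r ε')

/-- The eigenvalues `c_k = (2k(2r−k) − r(2r−1))/(16(r−1))`. -/
def cEv (r k : ℕ) : ℂ :=
  (2*(k:ℂ)*(2*(r:ℂ)-(k:ℂ)) - (r:ℂ)*(2*(r:ℂ)-1)) / (16*((r:ℂ)-1))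

/-- The spectral projectors `P_k = Π_{j≠k} (Ĉ − c_j)/(c_k − c_j)`. -/
def Pk (r k : ℕ) : Cl r ⊗[ℂ] Cl r :=
  (((List.range (r+1)).filter (fun j => j ≠ k)).map
    (fun j => (cEv r k - cEv r j)⁻¹ • (sC r - cEv r j • 1))).prod

/-- `P_r^S = (p_{++} + p_{−−})·P_r`. -/
def PrS (r : ℕ) : Cl r ⊗[ℂ] Cl r := (ppCh r 1 1 + ppCh r (-1) (-1)) * Pk r r

/-- The ascending factorial `a_k(u) = (u/2)(u/2+1)⋯(u/2+k−1)`. -/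
def asc (u : ℂ) (k : ℕ) : ℂ := ∏ j ∈ Finset.range k, (u/2 + (j:ℂ))

/-!
The elements `Γ_i ⊗ Γ_i` are commuting involutions `x_i`, and `I_k = k! e_k(x)`. For a sign vector
`ε`, the product `∏ (1 + ε_i x_i)` is a joint eigenvector with `x_i ↦ ε_i`, and these products sum
to a nonzero scalar, so a polynomial identity in the `x_i` may be checked at all sign vectors.

Where `ε` has `m` plus signs, `Ĉ` takes the value `c_m = c_{2r-m}`, so `P_r` vanishes unless
`m = r`. In that case `∏ (X + ε_i) = (X² - 1)^r`, whence `e_{2k}(ε) = (-1)^k C(r,k)`. The chirality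
factor `(1 + Γ_{2r+1} ⊗ Γ_{2r+1})/2` is a polynomial in the `x_i` as well, so it commutes with
`I_{2k}`.
-/

section SignVectors

open MvPolynomial Finset

variable {σ R A : Type*} [CommRing R] [Ring A] [Algebra R A]

/-- Evaluation of a polynomial at the sign vector `ε`, a joint eigenvalue of a family of commuting
involutions indexed by `σ`. -/
abbrev signEval (ε : σ → ℤˣ) : MvPolynomial σ R →+* R :=
  eval fun i => ((ε i : ℤ) : R)

lemma sum_prod_one_add_units_mul [Fintype σ] [DecidableEq σ] (x : σ → R) :
    ∑ ε : σ → ℤˣ, ∏ i, (1 + ((ε i : ℤ) : R) * x i) = 2 ^ Fintype.card σ := by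
  rw [← Fintype.piFinset_univ,
    ← prod_univ_sum (fun _ => univ) fun i (u : ℤˣ) => 1 + ((u : ℤ) : R) * x i,
    ← card_univ, ← prod_const]
  refine prod_congr rfl fun i _ => ?_
  rw [UnitsInt.univ, sum_pair (by decide)]
  push_cast
  ring

variable {Ψ : MvPolynomial σ R →ₐ[R] A}

lemma map_mul_prod_one_add_units_mul_X [Fintype σ] (hΨ : ∀ i, Ψ (X i) * Ψ (X i) = 1)
    (ε : σ → ℤˣ) (F : MvPolynomial σ R) :
    Ψ (F * ∏ i, (1 + ((ε i : ℤ) : MvPolynomial σ R) * X i)) =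
      signEval ε F • Ψ (∏ i, (1 + ((ε i : ℤ) : MvPolynomial σ R) * X i)) := by
  classical
  set w : MvPolynomial σ R := ∏ i, (1 + ((ε i : ℤ) : MvPolynomial σ R) * X i) with hw
  have hX (i : σ) : Ψ (X i * w) = ((ε i : ℤ) : R) • Ψ w := by
    have hε : ((ε i : ℤ) : MvPolynomial σ R) * ((ε i : ℤ) : MvPolynomial σ R) = 1 := by
      exact_mod_cast
        congrArg (fun u : ℤˣ => ((u : ℤ) : MvPolynomial σ R)) (Int.units_mul_self (ε i))
    have hdiff : X i * w = ((ε i : ℤ) : R) • w + (X i * X i - 1) *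
        (((ε i : ℤ) : MvPolynomial σ R) *
          ∏ j ∈ univ.erase i, (1 + ((ε j : ℤ) : MvPolynomial σ R) * X j)) := by
      rw [hw, ← mul_prod_erase univ _ (mem_univ i), Int.cast_smul_eq_zsmul, zsmul_eq_mul]
      linear_combination
        -X i * (∏ j ∈ univ.erase i, (1 + ((ε j : ℤ) : MvPolynomial σ R) * X j)) * hε
    rw [hdiff, map_add, map_smul, map_mul Ψ (_ - _), map_sub, map_mul, hΨ, map_one, sub_self,
      zero_mul, add_zero]
  induction F using MvPolynomial.induction_on with
  | C a => simp [← algebraMap_eq, ← Algebra.smul_def]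
  | add F G hF hG => rw [add_mul, map_add, hF, hG, map_add, add_smul]
  | mul_X F i hF =>
    rw [mul_assoc, map_mul, hX, mul_smul_comm, ← map_mul, hF, smul_smul, map_mul, eval_X, mul_comm]

theorem map_eq_zero_of_signEval_eq_zero [Finite σ] [Invertible (2 : R)]
    (hΨ : ∀ i, Ψ (X i) * Ψ (X i) = 1) {F : MvPolynomial σ R} (hF : ∀ ε, signEval ε F = 0) :
    Ψ F = 0 := by
  classical
  have := Fintype.ofFinite σ
  have h : (2 ^ Fintype.card σ : R) • Ψ F = 0 := by
    rw [← map_smul, Algebra.smul_def, map_pow, map_ofNat, mul_comm,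
      ← sum_prod_one_add_units_mul X, mul_sum, map_sum]
    exact sum_eq_zero fun ε _ => by
      rw [map_mul_prod_one_add_units_mul_X hΨ, hF, zero_smul]
  exact ((isUnit_of_invertible (2 : R)).pow _).smul_eq_zero.mp h

end SignVectors

section SignVectorValues

open MvPolynomial Finset

variable {σ R : Type*} [Fintype σ] [CommRing R]

lemma sum_intCast_units (ε : σ → ℤˣ) :
    ∑ i, ((ε i : ℤ) : R) = 2 * (#{i | ε i = 1} : R) - Fintype.card σ := by
  have h (i : σ) : ((ε i : ℤ) : R) = 2 * (if ε i = 1 then 1 else 0) - 1 := by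
    rcases Int.units_eq_one_or (ε i) with h | h <;> norm_num [h]
  rw [sum_congr rfl fun i _ => h i, sum_sub_distrib, ← mul_sum, sum_boole]
  simp

lemma two_mul_signEval_esymm_two (ε : σ → ℤˣ) :
    2 * signEval ε (esymm σ R 2) =
      (2 * (#{i | ε i = 1} : R) - Fintype.card σ) ^ 2 - Fintype.card σ := by
  have hanti : {a ∈ antidiagonal 2 | a.1 ∈ Set.Ioo 0 2} = {((1 : ℕ), (1 : ℕ))} := by decide
  have newton := psum_eq_mul_esymm_sub_sum σ R 2 two_pos
  rw [hanti, sum_singleton, esymm_one, psum_one] at newton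
  have hp : signEval ε (psum σ R 2) = Fintype.card σ := by
    have hε (i : σ) : ((ε i : ℤ) : R) ^ 2 = 1 := by
      exact_mod_cast congrArg (fun u : ℤˣ => ((u : ℤ) : R)) (Int.units_sq (ε i))
    simp [psum, hε]
  have heval := congrArg (signEval ε) newton
  simp only [map_sub, map_mul, map_pow, map_neg, map_one, map_natCast, map_sum, eval_X, hp,
    sum_intCast_units] at heval
  push_cast at heval
  linear_combination heval

lemma prod_X_add_C_units (ε : σ → ℤˣ) :
    ∏ i, (Polynomial.X + Polynomial.C ((ε i : ℤ) : R)) =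
      (Polynomial.X + 1) ^ #{i | ε i = 1} * (Polynomial.X - 1) ^ #{i | ε i ≠ 1} := by
  rw [← prod_const, ← prod_const, ← prod_filter_mul_prod_filter_not univ (fun i => ε i = 1)]
  congr 1 <;> refine prod_congr rfl fun i hi => ?_
  · simp [(mem_filter.mp hi).2]
  · simp [(Int.units_eq_one_or (ε i)).resolve_left (mem_filter.mp hi).2, sub_eq_add_neg]

lemma signEval_esymm_two_mul {ε : σ → ℤˣ} {m k : ℕ} (hm : #{i | ε i = 1} = m)
    (hσ : Fintype.card σ = 2 * m) (hk : k ≤ m) :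
    signEval ε (esymm σ R (2 * k)) = (-1) ^ k * (m.choose k : R) := by
  have hneg : #{i | ε i ≠ 1} = m := by
    have := card_filter_add_card_filter_not (s := (univ : Finset σ)) (fun i => ε i = 1)
    rw [card_univ, hσ, hm] at this
    simp only [ne_eq]
    omega
  have hexp : ∏ i, (Polynomial.X + Polynomial.C ((ε i : ℤ) : R)) =
      Polynomial.expand R 2 ((Polynomial.X + Polynomial.C (-1)) ^ m) := by
    rw [prod_X_add_C_units, hm, hneg, ← mul_pow]
    simp only [map_pow, map_add, Polynomial.expand_X, map_neg, map_one]
    ring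
  have hcoeff := prod_X_add_C_coeff univ (fun i => ((ε i : ℤ) : R)) (k := 2 * (m - k))
    (by rw [card_univ]; omega)
  rw [hexp, Polynomial.coeff_expand_mul' two_pos, Polynomial.coeff_X_add_C_pow, card_univ, hσ,
    ← Nat.mul_sub, Nat.sub_sub_self hk, Nat.choose_symm hk] at hcoeff
  simp [esymm, hcoeff]

lemma card_filter_injective_image_eq [DecidableEq σ] {k : ℕ} {T : Finset σ} (hT : #T = k) :
    #{f : Fin k → σ | Function.Injective f ∧ univ.image f = T} = k.factorial := by
  have hval : Function.Injective fun (e : Fin k ↪ T) j => (e j : σ) := fun e e' h => by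
    ext j
    exact congrFun h j
  have himage : ({f | Function.Injective f ∧ univ.image f = T} : Finset (Fin k → σ)) =
      univ.image fun (e : Fin k ↪ T) j => (e j : σ) := by
    ext f
    simp only [mem_filter_univ, mem_image, mem_univ, true_and]
    constructor
    · rintro ⟨hf, rfl⟩
      exact ⟨⟨fun j => ⟨f j, mem_image_of_mem f (mem_univ j)⟩,
        fun a b hab => hf (congrArg Subtype.val hab)⟩, rfl⟩
    · rintro ⟨e, rfl⟩
      have he : Function.Injective fun j => (e j : σ) := Subtype.val_injective.comp e.injective
      refine ⟨he, eq_of_subset_of_card_le (image_subset_iff.mpr fun j _ => (e j).2) ?_⟩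
      rw [card_image_of_injective _ he, hT, card_univ, Fintype.card_fin]
  rw [himage, card_image_of_injective _ hval, card_univ, Fintype.card_embedding_eq,
    Fintype.card_coe, hT, Fintype.card_fin, Nat.descFactorial_self]

lemma sum_filter_injective_prod [DecidableEq σ] (x : σ → R) (k : ℕ) :
    ∑ f : Fin k → σ with Function.Injective f, ∏ j, x (f j) =
      k.factorial * ∑ T ∈ powersetCard k univ, ∏ i ∈ T, x i := by
  have hmaps : ∀ f ∈ ({f : Fin k → σ | Function.Injective f} : Finset _),
      univ.image f ∈ powersetCard k univ := fun f hf => by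
    rw [mem_powersetCard_univ, card_image_of_injective _ (mem_filter_univ f |>.mp hf), card_univ,
      Fintype.card_fin]
  rw [← sum_fiberwise_of_maps_to hmaps, mul_sum]
  refine sum_congr rfl fun T hT => ?_
  rw [filter_filter, ← card_filter_injective_image_eq (mem_powersetCard_univ.mp hT),
    ← nsmul_eq_mul, ← sum_const]
  refine sum_congr rfl fun f hf => ?_
  obtain ⟨hinj, rfl⟩ := (mem_filter_univ f).mp hf
  rw [prod_image hinj.injOn]

end SignVectorValues

section Anticommuting

variable {A : Type*} [Ring A]

lemma prod_ofFn_swap_castSucc_succ {k : ℕ} (v : Fin (k + 1) → A)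
    (hv : Pairwise fun a b => v a * v b = -(v b * v a)) (i : Fin k) :
    (List.ofFn fun j => v (Equiv.swap i.castSucc i.succ j)).prod = -(List.ofFn v).prod := by
  induction k with
  | zero => exact i.elim0
  | succ k ih =>
    cases i using Fin.cases with
    | zero =>
      have hfix (j : Fin k) : Equiv.swap (0 : Fin (k + 2)) 1 j.succ.succ = j.succ.succ :=
        Equiv.swap_apply_of_ne_of_ne (Fin.succ_ne_zero _)
          fun h => Fin.succ_ne_zero j (Fin.succ_injective _ h)
      have h01 : v 1 * v 0 = -(v 0 * v 1) := hv (by simp)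
      simp [List.ofFn_succ, hfix, ← mul_assoc, h01]
    | succ i =>
      have hzero : Equiv.swap i.succ.castSucc i.succ.succ (0 : Fin (k + 2)) = 0 :=
        Equiv.swap_apply_of_ne_of_ne (by simp [Fin.ext_iff]) (Fin.succ_ne_zero _).symm
      have hsucc (j : Fin (k + 1)) : Equiv.swap i.succ.castSucc i.succ.succ j.succ =
          (Equiv.swap i.castSucc i.succ j).succ := by
        rw [← Fin.succ_castSucc, (Fin.succ_injective _).swap_apply]
      have htail := ih (fun j => v j.succ) (fun a b hab => hv (by simpa using hab)) i
      rw [List.ofFn_succ, List.ofFn_succ (f := v), List.prod_cons, List.prod_cons, hzero]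
      simp only [hsucc, htail, mul_neg]

lemma prod_ofFn_comp_perm {k : ℕ} (π : Equiv.Perm (Fin k)) (v : Fin k → A)
    (hv : Pairwise fun a b => v a * v b = -(v b * v a)) :
    (List.ofFn fun j => v (π j)).prod = Equiv.Perm.sign π • (List.ofFn v).prod := by
  cases k with
  | zero => simp [Subsingleton.elim π 1]
  | succ k =>
    have hπ : π ∈ Submonoid.closure (Set.range fun i : Fin k => Equiv.swap i.castSucc i.succ) :=
      Equiv.Perm.mclosure_swap_castSucc_succ k ▸ Submonoid.mem_top π
    induction hπ using Submonoid.closure_induction generalizing v with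
    | mem π h =>
      obtain ⟨i, rfl⟩ := h
      rw [prod_ofFn_swap_castSucc_succ v hv, Equiv.Perm.sign_swap i.castSucc_lt_succ.ne]
      simp
    | one => simp
    | mul π ρ _ _ hπ hρ =>
      have := hρ (fun j => v (π j)) fun a b hab => hv (π.injective.ne hab)
      simp only [Equiv.Perm.mul_apply, this, hπ v hv, smul_smul, map_mul, mul_comm]

end Anticommuting

section CommutingFamily

variable {R A σ : Type*} [CommSemiring R] [Semiring A] [Algebra R A]

open scoped IsMulCommutative in
/-- Evaluation of commutative polynomials at a commuting family of elements of a possibly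
noncommutative algebra: `MvPolynomial.aeval` with values in the subalgebra they generate. -/
def aevalOfCommute (x : σ → A) (hx : ∀ i j, Commute (x i) (x j)) : MvPolynomial σ R →ₐ[R] A :=
  have : IsMulCommutative (Algebra.adjoin R (Set.range x)) :=
    Algebra.isMulCommutative_adjoin R (by rintro _ ⟨i, rfl⟩ _ ⟨j, rfl⟩; exact hx i j)
  (Algebra.adjoin R (Set.range x)).val.comp
    (MvPolynomial.aeval fun i => ⟨x i, Algebra.subset_adjoin ⟨i, rfl⟩⟩)

@[simp]
lemma aevalOfCommute_X (x : σ → A) (hx : ∀ i j, Commute (x i) (x j)) (i : σ) :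
    aevalOfCommute (R := R) x hx (MvPolynomial.X i) = x i := by
  simp [aevalOfCommute]

end CommutingFamily

section CliffordInvariants

open MvPolynomial Finset

variable {r k : ℕ}

lemma Γgen_mul_self (i : Fin (2 * r)) : Γgen r i * Γgen r i = 1 := by
  have hQ : Qf r (Pi.single i 1) = 1 := by
    simp [Qf, QuadraticMap.weightedSumSquares_apply, Pi.single_apply]
  rw [Γgen, CliffordAlgebra.ι_sq_scalar, hQ, map_one]

lemma Γgen_anticommute :
    Pairwise fun i j : Fin (2 * r) => Γgen r i * Γgen r j = -(Γgen r j * Γgen r i) := by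
  intro i j hij
  refine CliffordAlgebra.ι_mul_ι_comm_of_isOrtho ?_
  simp only [QuadraticMap.isOrtho_def, Qf, QuadraticMap.weightedSumSquares_apply,
    ← sum_add_distrib]
  refine sum_congr rfl fun x _ => ?_
  by_cases hi : x = i <;> by_cases hj : x = j <;> simp_all

lemma Γbr_of_injective {i : Fin k → Fin (2 * r)} (hi : Function.Injective i) :
    Γbr r k i = (List.ofFn fun j => Γgen r (i j)).prod := by
  have hterm (π : Equiv.Perm (Fin k)) :
      ((Equiv.Perm.sign π : ℤ) : ℂ) • (List.ofFn fun j => Γgen r (i (π j))).prod =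
        (List.ofFn fun j => Γgen r (i j)).prod := by
    rw [prod_ofFn_comp_perm π (fun j => Γgen r (i j)) fun a b hab => Γgen_anticommute (hi.ne hab),
      Int.cast_smul_eq_zsmul, ← Units.smul_def, smul_smul, Int.units_mul_self, one_smul]
  rw [Γbr, sum_congr rfl fun π _ => hterm π, sum_const, card_univ, Fintype.card_perm,
    Fintype.card_fin, ← Nat.cast_smul_eq_nsmul ℂ,
    inv_smul_smul₀ (Nat.cast_ne_zero.mpr k.factorial_ne_zero)]

lemma Γbr_eq_alternatization (i : Fin k → Fin (2 * r)) :
    Γbr r k i = ((k.factorial : ℂ))⁻¹ •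
      (MultilinearMap.mkPiAlgebraFin ℂ k (Cl r)).alternatization fun j => Γgen r (i j) := by
  simp [Γbr, MultilinearMap.alternatization_apply, Units.smul_def, Int.cast_smul_eq_zsmul]

lemma Γbr_of_not_injective {i : Fin k → Fin (2 * r)} (hi : ¬ Function.Injective i) :
    Γbr r k i = 0 := by
  have hΓ : ¬ Function.Injective fun j => Γgen r (i j) :=
    fun h => hi (Function.Injective.of_comp (f := Γgen r) h)
  rw [Γbr_eq_alternatization, AlternatingMap.map_eq_zero_of_not_injective _ _ hΓ, smul_zero]

/-- The commuting involutions `Γ_i ⊗ Γ_i`, in which every `I_k` is a polynomial. -/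
def Γdiag (r : ℕ) (i : Fin (2 * r)) : Cl r ⊗[ℂ] Cl r := Γgen r i ⊗ₜ[ℂ] Γgen r i

lemma Γdiag_mul_self (i : Fin (2 * r)) : Γdiag r i * Γdiag r i = 1 := by
  rw [Γdiag, Algebra.TensorProduct.tmul_mul_tmul, Γgen_mul_self, Algebra.TensorProduct.one_def]

lemma Γdiag_commute (i j : Fin (2 * r)) : Commute (Γdiag r i) (Γdiag r j) := by
  rcases eq_or_ne i j with rfl | hij
  · rfl
  · simp only [Commute, SemiconjBy, Γdiag, Algebra.TensorProduct.tmul_mul_tmul,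
      Γgen_anticommute hij, TensorProduct.neg_tmul, TensorProduct.tmul_neg, neg_neg]

/-- The homomorphism `X_i ↦ Γ_i ⊗ Γ_i`, through which identities between the `I_k` and `P_k` are
checked on polynomials. -/
def diagHom (r : ℕ) : MvPolynomial (Fin (2 * r)) ℂ →ₐ[ℂ] Cl r ⊗[ℂ] Cl r :=
  aevalOfCommute (Γdiag r) Γdiag_commute

lemma diagHom_eq_of_signEval_eq {F G : MvPolynomial (Fin (2 * r)) ℂ}
    (h : ∀ ε, signEval ε F = signEval ε G) : diagHom r F = diagHom r G := by
  rw [← sub_eq_zero, ← map_sub]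
  refine map_eq_zero_of_signEval_eq_zero (fun i => ?_) fun ε => ?_
  · rw [diagHom, aevalOfCommute_X, Γdiag_mul_self]
  · rw [map_sub, h, sub_self]

lemma diagHom_prod_X (i : Fin k → Fin (2 * r)) :
    diagHom r (∏ j, X (i j)) =
      (List.ofFn fun j => Γgen r (i j)).prod ⊗ₜ[ℂ] (List.ofFn fun j => Γgen r (i j)).prod := by
  induction k with
  | zero => simp [Algebra.TensorProduct.one_def]
  | succ k ih =>
    rw [Fin.prod_univ_succ, map_mul, ih, diagHom, aevalOfCommute_X, Γdiag,
      Algebra.TensorProduct.tmul_mul_tmul, List.ofFn_succ, List.prod_cons]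

lemma Ik_eq_diagHom : Ik r k = diagHom r (k.factorial * esymm (Fin (2 * r)) ℂ k) := by
  rw [esymm, ← sum_filter_injective_prod, map_sum, sum_filter, Ik]
  refine sum_congr rfl fun i _ => ?_
  split_ifs with hi
  · rw [Γbr_of_injective hi, diagHom_prod_X]
  · rw [Γbr_of_not_injective hi, TensorProduct.zero_tmul]

lemma chirality_mem_range_diagHom : ppCh r 1 1 + ppCh r (-1) (-1) ∈ (diagHom r).range := by
  have hΓtop : Γtop r ⊗ₜ[ℂ] Γtop r ∈ (diagHom r).range := by
    rw [Γtop, TensorProduct.smul_tmul_smul, ← diagHom_prod_X fun j => j]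
    exact Subalgebra.smul_mem _ (AlgHom.mem_range_self _ _) _
  have h : ppCh r 1 1 + ppCh r (-1) (-1) = (2 : ℂ)⁻¹ • (1 + Γtop r ⊗ₜ[ℂ] Γtop r) := by
    simp only [ppCh, pCh, TensorProduct.smul_tmul_smul, TensorProduct.add_tmul,
      TensorProduct.tmul_add, one_smul, neg_smul, TensorProduct.neg_tmul, TensorProduct.tmul_neg,
      Algebra.TensorProduct.one_def]
    module
  rw [h]
  exact Subalgebra.smul_mem _ (add_mem (one_mem _) hΓtop) _

lemma commute_Ik_chirality : Commute (Ik r k) (ppCh r 1 1 + ppCh r (-1) (-1)) := by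
  obtain ⟨Q, hQ⟩ := chirality_mem_range_diagHom
  rw [← hQ, Ik_eq_diagHom]
  exact (Commute.all _ _).map (diagHom r)

/-- The polynomial representing the split Casimir element under `diagHom`. -/
def casimirPoly (r : ℕ) : MvPolynomial (Fin (2 * r)) ℂ :=
  (-(16 * (2 * (r : ℂ) - 2))⁻¹) • (2 * esymm (Fin (2 * r)) ℂ 2)

/-- The polynomial representing the spectral projector `P_k` under `diagHom`. -/
def spectralPoly (r k : ℕ) : MvPolynomial (Fin (2 * r)) ℂ :=
  (((List.range (r + 1)).filter (fun j => j ≠ k)).map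
    (fun j => (cEv r k - cEv r j)⁻¹ • (casimirPoly r - cEv r j • 1))).prod

lemma sC_eq_diagHom : sC r = diagHom r (casimirPoly r) := by
  rw [sC, Ik_eq_diagHom, casimirPoly, map_smul, Nat.factorial_two, Nat.cast_ofNat]

lemma Pk_eq_diagHom : Pk r k = diagHom r (spectralPoly r k) := by
  rw [spectralPoly, map_list_prod, List.map_map, Pk]
  simp [Function.comp_def, sC_eq_diagHom]

lemma signEval_casimirPoly (hr : r ≠ 1) (ε : Fin (2 * r) → ℤˣ) :
    signEval ε (casimirPoly r) = cEv r #{i | ε i = 1} := by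
  have hr' : (r : ℂ) - 1 ≠ 0 := sub_ne_zero.mpr (by exact_mod_cast hr)
  rw [casimirPoly, smul_eval, map_mul, map_ofNat, two_mul_signEval_esymm_two, Fintype.card_fin, cEv,
    show (2 * (r : ℂ) - 2) = 2 * (r - 1) by ring]
  push_cast
  field_simp
  ring

lemma cEv_reflect {m : ℕ} (hm : m ≤ 2 * r) : cEv r (2 * r - m) = cEv r m := by
  rw [cEv, cEv, Nat.cast_sub hm]
  push_cast
  ring

lemma signEval_spectralPoly_self_eq_zero (hr : r ≠ 1) {ε : Fin (2 * r) → ℤˣ}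
    (hε : #{i | ε i = 1} ≠ r) : signEval ε (spectralPoly r r) = 0 := by
  set m := #{i | ε i = 1}
  have hm : m ≤ 2 * r := by simpa using card_le_univ ({i | ε i = 1} : Finset (Fin (2 * r)))
  obtain ⟨j, hj, hcj⟩ : ∃ j < r, cEv r m = cEv r j := by
    rcases lt_or_gt_of_ne hε with h | h
    · exact ⟨m, h, rfl⟩
    · exact ⟨2 * r - m, by omega, (cEv_reflect hm).symm⟩
  rw [spectralPoly, map_list_prod, List.map_map]
  refine List.prod_eq_zero (List.mem_map.mpr ⟨j, ?_, ?_⟩)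
  · simp only [List.mem_filter, List.mem_range, decide_eq_true_eq]
    omega
  · simp [signEval_casimirPoly hr, ← hcj, m]

lemma Ik_mul_Pk_self (hr : r ≠ 1) (hk : k ≤ r) :
    Ik r (2 * k) * Pk r r =
      ((-1 : ℂ) ^ k * ((2 * k).factorial : ℂ) * (r.choose k : ℂ)) • Pk r r := by
  rw [Ik_eq_diagHom, Pk_eq_diagHom, ← map_mul, ← map_smul]
  refine diagHom_eq_of_signEval_eq fun ε => ?_
  rw [map_mul, smul_eval]
  by_cases hε : #{i | ε i = 1} = r
  · rw [map_mul, map_natCast, signEval_esymm_two_mul hε (Fintype.card_fin _) hk]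
    ring
  · rw [signEval_spectralPoly_self_eq_zero hr hε, mul_zero, mul_zero]

end CliffordInvariants

/-- `I_{2k}·P_r^S = (−1)^k·(2k)!·C(r,k)·P_r^S` for `0 ≤ k ≤ r`. -/
theorem Ik_mul_PrS (r : ℕ) (hr : 2 ≤ r) (k : ℕ) (hk : k ≤ r) :
    Ik r (2*k) * PrS r
      = ((-1:ℂ)^k * (((2*k).factorial : ℕ) : ℂ) * ((r.choose k : ℕ) : ℂ)) • PrS r := by
  rw [PrS, commute_Ik_chirality.left_comm, Ik_mul_Pk_self (by omega) hk, mul_smul_comm]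

end
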